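/- For every compact set K ⊂ ℝˢ and every ε > 0 there exists b > 0 such that for every p ∈ K and every q ∈ ℝˢ with ω_p(q) ≥ 2·ω(p/2) + ε one has ‖∇ω_p(q)‖ ≥ b. That is, the gradient of ω_p is bounded below by a positive constant, uniformly for p in compact sets, on the region where the two-particle energy exceeds its minimum by at least ε. -/

import Mathlib

/-!
Let `W = ω_p(q)` and `W₀ = ω_p(0) = 2 ω(p/2)`. Convexity of `ω_p` gives
`W - W₀ ≤ ⟪∇ω_p(q), q⟫ ≤ ‖∇ω_p(q)‖ ‖q‖`, while `ω ≥ ‖·‖` and the triangle inequality give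
`2 ‖q‖ ≤ W`. Hence `‖∇ω_p(q)‖ ≥ 2 (1 - W₀ / W)`, which is at least `2 ε / (W₀ + ε)` once
`W ≥ W₀ + ε`; and `W₀` is bounded for `p` in a bounded set.
-/

open scoped RealInnerProductSpace

section

variable {E : Type*} [NormedAddCommGroup E]

/-- The relativistic dispersion relation `ω(x) = √(m² + ‖x‖²)` of a particle of mass `m`. -/
noncomputable def relativisticEnergy (m : ℝ) (x : E) : ℝ :=
  √(m ^ 2 + ‖x‖ ^ 2)

theorem relativisticEnergy_nonneg (m : ℝ) (x : E) : 0 ≤ relativisticEnergy m x :=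
  Real.sqrt_nonneg _

theorem sq_relativisticEnergy (m : ℝ) (x : E) :
    relativisticEnergy m x ^ 2 = m ^ 2 + ‖x‖ ^ 2 :=
  Real.sq_sqrt (by positivity)

theorem norm_le_relativisticEnergy (m : ℝ) (x : E) : ‖x‖ ≤ relativisticEnergy m x :=
  Real.le_sqrt_of_sq_le (le_add_of_nonneg_left (sq_nonneg m))

theorem relativisticEnergy_le_of_norm_le (m : ℝ) {x : E} {r : ℝ} (hx : ‖x‖ ≤ r) :
    relativisticEnergy m x ≤ √(m ^ 2 + r ^ 2) := by
  unfold relativisticEnergy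
  gcongr

variable [InnerProductSpace ℝ E]

/-- The velocity `x / ω(x)`, which is the gradient of `relativisticEnergy m` at `x`. For `m = 0`
and `x = 0`, where the energy is not differentiable, the convention `0⁻¹ = 0` gives the
subgradient `0`. -/
noncomputable def relativisticVelocity (m : ℝ) (x : E) : E :=
  (relativisticEnergy m x)⁻¹ • x

/-- The energy `ω_p(q) = ω(p/2 + q) + ω(p/2 - q)` of two particles of mass `m` with total
momentum `p` and relative momentum `q`. -/
noncomputable def pairEnergy (m : ℝ) (p q : E) : ℝ :=
  relativisticEnergy m ((1 / 2 : ℝ) • p + q) + relativisticEnergy m ((1 / 2 : ℝ) • p - q)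

/-- The gradient `∇ω_p(q)` of `pairEnergy m p` at `q`, written as the difference of the two
particle velocities. -/
noncomputable def pairEnergyGradient (m : ℝ) (p q : E) : E :=
  relativisticVelocity m ((1 / 2 : ℝ) • p + q) - relativisticVelocity m ((1 / 2 : ℝ) • p - q)

-- The energy of `x` is the norm of `(m, x)` in `ℝ × E`, so this is the Cauchy–Schwarz inequality.
theorem sq_add_inner_le_relativisticEnergy_mul (m : ℝ) (x y : E) :
    m ^ 2 + ⟪x, y⟫ ≤ relativisticEnergy m x * relativisticEnergy m y := by
  simpa [relativisticEnergy, WithLp.prod_norm_eq_of_L2, WithLp.prod_inner_apply, sq] using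
    real_inner_le_norm (WithLp.toLp 2 (m, x)) (WithLp.toLp 2 (m, y))

theorem relativisticEnergy_sub_le_inner (m : ℝ) (x y : E) :
    relativisticEnergy m x - relativisticEnergy m y ≤ ⟪relativisticVelocity m x, x - y⟫ := by
  rw [relativisticVelocity, real_inner_smul_left, inner_sub_right, real_inner_self_eq_norm_sq,
    inv_mul_eq_div]
  rcases (relativisticEnergy_nonneg m x).eq_or_lt with hzero | hpos
  · simpa [← hzero] using relativisticEnergy_nonneg m y
  · rw [le_div_iff₀ hpos]
    linarith [sq_add_inner_le_relativisticEnergy_mul m x y, sq_relativisticEnergy m x]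

theorem pairEnergy_sub_le_inner (m : ℝ) (p q : E) :
    pairEnergy m p q - 2 * relativisticEnergy m ((1 / 2 : ℝ) • p) ≤
      ⟪pairEnergyGradient m p q, q⟫ := by
  have hplus := relativisticEnergy_sub_le_inner m ((1 / 2 : ℝ) • p + q) ((1 / 2 : ℝ) • p)
  have hminus := relativisticEnergy_sub_le_inner m ((1 / 2 : ℝ) • p - q) ((1 / 2 : ℝ) • p)
  rw [add_sub_cancel_left] at hplus
  rw [sub_sub_cancel_left, inner_neg_right] at hminus
  rw [pairEnergy, pairEnergyGradient, inner_sub_left]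
  linarith

theorem two_mul_norm_le_pairEnergy (m : ℝ) (p q : E) : 2 * ‖q‖ ≤ pairEnergy m p q := by
  set a := (1 / 2 : ℝ) • p
  calc
    2 * ‖q‖ = ‖(a + q) - (a - q)‖ := by
      rw [add_sub_sub_cancel, ← two_smul ℝ q, norm_smul, Real.norm_two]
    _ ≤ ‖a + q‖ + ‖a - q‖ := norm_sub_le _ _
    _ ≤ pairEnergy m p q :=
      add_le_add (norm_le_relativisticEnergy m _) (norm_le_relativisticEnergy m _)

theorem two_mul_pairEnergy_sub_le_norm_mul (m : ℝ) (p q : E) :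
    2 * (pairEnergy m p q - 2 * relativisticEnergy m ((1 / 2 : ℝ) • p)) ≤
      ‖pairEnergyGradient m p q‖ * pairEnergy m p q :=
  calc
    2 * (pairEnergy m p q - 2 * relativisticEnergy m ((1 / 2 : ℝ) • p))
        ≤ 2 * ⟪pairEnergyGradient m p q, q⟫ := by gcongr; exact pairEnergy_sub_le_inner m p q
    _ ≤ 2 * (‖pairEnergyGradient m p q‖ * ‖q‖) := by gcongr; exact real_inner_le_norm _ _
    _ = ‖pairEnergyGradient m p q‖ * (2 * ‖q‖) := by ring
    _ ≤ ‖pairEnergyGradient m p q‖ * pairEnergy m p q := by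
      gcongr; exact two_mul_norm_le_pairEnergy m p q

theorem two_mul_div_le_norm_pairEnergyGradient (m : ℝ) {p q : E} {ε : ℝ} (hε : 0 < ε)
    (hq : 2 * relativisticEnergy m ((1 / 2 : ℝ) • p) + ε ≤ pairEnergy m p q) :
    2 * ε / (2 * relativisticEnergy m ((1 / 2 : ℝ) • p) + ε) ≤ ‖pairEnergyGradient m p q‖ := by
  have hmul := two_mul_pairEnergy_sub_le_norm_mul m p q
  have hmin := relativisticEnergy_nonneg m ((1 / 2 : ℝ) • p)
  set W₀ := 2 * relativisticEnergy m ((1 / 2 : ℝ) • p)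
  set W := pairEnergy m p q
  have hW₀ : 0 ≤ W₀ := by positivity
  have hW : 0 < W := by linarith
  calc
    2 * ε / (W₀ + ε) ≤ 2 * (W - W₀) / W := by
      rw [div_le_div_iff₀ (by positivity) hW]
      linarith [mul_nonneg hW₀ (sub_nonneg.2 hq)]
    _ ≤ ‖pairEnergyGradient m p q‖ := (div_le_iff₀ hW).2 hmul

theorem omega_p_gradient_lower_bound_general (m : ℝ) {K : Set E} (hK : Bornology.IsBounded K)
    {ε : ℝ} (hε : 0 < ε) :
    ∃ b > (0 : ℝ), ∀ p ∈ K, ∀ q : E,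
      2 * relativisticEnergy m ((1 / 2 : ℝ) • p) + ε ≤ pairEnergy m p q →
        b ≤ ‖pairEnergyGradient m p q‖ := by
  obtain ⟨r, hr⟩ := (hK.smul₀ (1 / 2 : ℝ)).exists_norm_le
  refine ⟨2 * ε / (2 * √(m ^ 2 + r ^ 2) + ε), by positivity, fun p hp q hq ↦ ?_⟩
  have henergy : relativisticEnergy m ((1 / 2 : ℝ) • p) ≤ √(m ^ 2 + r ^ 2) :=
    relativisticEnergy_le_of_norm_le m (hr _ (Set.smul_mem_smul_set hp))
  have hnonneg := relativisticEnergy_nonneg m ((1 / 2 : ℝ) • p)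
  calc
    2 * ε / (2 * √(m ^ 2 + r ^ 2) + ε)
        ≤ 2 * ε / (2 * relativisticEnergy m ((1 / 2 : ℝ) • p) + ε) := by gcongr
    _ ≤ ‖pairEnergyGradient m p q‖ := two_mul_div_le_norm_pairEnergyGradient m hε hq

end

/-- For every compact `K ⊂ ℝˢ` and every `ε > 0` there is `b > 0` such that for all
`p ∈ K` and all `q` with `ω_p(q) ≥ 2·ω(p/2) + ε`, the gradient
`∇ω_p(q) = (p/2 + q)/ω(p/2 + q) − (p/2 − q)/ω(p/2 − q)` satisfies `‖∇ω_p(q)‖ ≥ b`.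
Here `ω(q) = √(m² + ‖q‖²)` and `ω_p(q) = ω(p/2 + q) + ω(p/2 − q)`. -/
theorem omega_p_gradient_lower_bound (s : ℕ) (hs : 1 ≤ s) (m : ℝ) (hm : 0 < m)
    (ω : EuclideanSpace ℝ (Fin s) → ℝ)
    (hω : ∀ q, ω q = Real.sqrt (m ^ 2 + ‖q‖ ^ 2))
    (K : Set (EuclideanSpace ℝ (Fin s))) (hK : IsCompact K)
    (ε : ℝ) (hε : 0 < ε) :
    ∃ b > (0 : ℝ), ∀ p ∈ K, ∀ q : EuclideanSpace ℝ (Fin s),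
      2 * ω ((1 / 2 : ℝ) • p) + ε ≤ ω ((1 / 2 : ℝ) • p + q) + ω ((1 / 2 : ℝ) • p - q) →
      b ≤ ‖(ω ((1 / 2 : ℝ) • p + q))⁻¹ • ((1 / 2 : ℝ) • p + q) -
            (ω ((1 / 2 : ℝ) • p - q))⁻¹ • ((1 / 2 : ℝ) • p - q)‖ := by
  obtain rfl : ω = relativisticEnergy m := funext hω
  exact omega_p_gradient_lower_bound_general m hK.isBounded hε
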